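/- arXiv:2412.06123 — 2 statements merged into one kernel-verified Lean document; each statement's English description precedes it below -/
import Mathlib

section
/- Let F be a field and A a finite-dimensional associative unital F-algebra with dim_F A ≤ m(A) + 4 and m(A) ≥ 3. Then l(A) ≤ m(A); that is, every generating set S of A satisfies l(S) ≤ m(A). -/
/-!
Write `V = span ({1} ∪ S)`, so that `Lk F S k = V ^ k`, and let `l` be the least `k` with
`V ^ k = ⊤`; the chain `V ^ 0 < V ^ 1 < ⋯ < V ^ l` is strict.

If some step `V ^ k < V ^ (k + 1)` with `k + 1 < l` has codimension one, then there is `v ∈ V` with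
`v ^ l ∉ V ^ (l - 1)`. Indeed, take `v * q ∈ V ^ (k + 1)` outside `V ^ k` with `v ∈ V`, `q ∈ V ^ k`.
For `w ∈ V` the product `q * w` is congruent modulo `V ^ k` to a multiple of `v * q`, so `v * q * w`
is congruent to a multiple of `v * (v * q)` modulo `V ^ (k + 1)`. Hence `V ^ (k + 2)` is spanned by
`V ^ (k + 1)` and `v * v * q` (`next_step`), and this element lies outside `V ^ (k + 1)`.
Dropping a suitable last factor of `q` gives a new element outside `V ^ k` that starts with `v * v`;
repeating, `v ^ (k + 1) ∉ V ^ k` (`exists_pow_notMem`), and `next_step` propagates this up to `l`.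
Then `1, v, …, v ^ l` are linearly independent, so the minimal polynomial of `v` has degree greater
than `l`, i.e. `l < m(A)`.

Therefore `m(A) < l` forces all steps before the last to have codimension at least two, and
`dim A ≥ 2 * l ≥ 2 * m(A) + 2 > m(A) + 4`, because `m(A) ≥ 3`.
-/

/-- `Lk F S k` is the `F`-linear span of all products of at most `k` elements of `S`
(the empty product `1` has length `0`); equivalently `V ^ k` with `V = span F ({1} ∪ S)`. -/
noncomputable def Lk (F : Type*) [Field F] {A : Type*} [Ring A] [Algebra F A]
    (S : Set A) (k : ℕ) : Submodule F A :=
  (Submodule.span F ({1} ∪ S)) ^ k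

/-- The length of a generating set `S`: the least `k` with `Lk F S k = ⊤`. -/
noncomputable def lenS (F : Type*) [Field F] {A : Type*} [Ring A] [Algebra F A]
    (S : Set A) : ℕ :=
  sInf {k | Lk F S k = ⊤}

/-- `mAlg F A` is the maximal degree over all `τ ∈ A` of the minimal polynomial of `τ`. -/
noncomputable def mAlg (F A : Type*) [Field F] [Ring A] [Algebra F A] : ℕ :=
  sSup {d | ∃ τ : A, d = (minpoly F τ).natDegree}

section

variable {F A : Type*} [Field F] [Ring A] [Algebra F A]

lemma pow_mono_of_one_mem {V : Submodule F A} (h1 : (1 : A) ∈ V) : Monotone fun k : ℕ => V ^ k := by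
  refine monotone_nat_of_le_succ fun n => ?_
  intro x hx
  rw [pow_succ]
  simpa using Submodule.mul_mem_mul hx h1

/-- If `V ^ (k + 1)` is spanned by `V ^ k` and one element `v * q`, then `V ^ (k + 2)` is spanned by
`V ^ (k + 1)` and `v * (v * q)`. -/
lemma next_step {V : Submodule F A} {k : ℕ} {v q : A}
    (hv : v ∈ V) (hq : q ∈ V ^ k)
    (h : V ^ (k + 1) ≤ V ^ k ⊔ F ∙ (v * q)) :
    V ^ (k + 2) ≤ V ^ (k + 1) ⊔ F ∙ (v * (v * q)) := by
  rw [pow_succ, Submodule.mul_le]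
  intro a ha w hw
  obtain ⟨b, hb, c, hc, rfl⟩ := Submodule.mem_sup.1 (h ha)
  obtain ⟨s, rfl⟩ := Submodule.mem_span_singleton.1 hc
  have hqw : q * w ∈ V ^ (k + 1) := by
    rw [pow_succ]; exact Submodule.mul_mem_mul hq hw
  obtain ⟨b', hb', c', hc', e⟩ := Submodule.mem_sup.1 (h hqw)
  obtain ⟨t, rfl⟩ := Submodule.mem_span_singleton.1 hc'
  refine Submodule.mem_sup.2 ⟨b * w + s • (v * b'), ?_, (s * t) • (v * (v * q)),
    Submodule.smul_mem _ _ (Submodule.mem_span_singleton_self _), ?_⟩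
  · refine add_mem ?_ (Submodule.smul_mem _ _ ?_)
    · rw [pow_succ]; exact Submodule.mul_mem_mul hb hw
    · rw [pow_succ']; exact Submodule.mul_mem_mul hv hb'
  · rw [add_mul, smul_mul_assoc, mul_assoc v q w, ← e, mul_add, smul_add, mul_smul_comm, smul_smul,
      add_assoc]

/-- If a nonzero step has codimension at most one, any outside element spans it. -/
lemma le_sup_span_of_finrank [FiniteDimensional F A] {U W : Submodule F A} {p : A}
    (hUW : U ≤ W) (hp : p ∈ W) (hpU : p ∉ U)
    (hr : Module.finrank F W ≤ Module.finrank F U + 1) : W ≤ U ⊔ F ∙ p := by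
  have hle : U ⊔ F ∙ p ≤ W := sup_le hUW (by simpa using hp)
  have hlt : U < U ⊔ F ∙ p := by
    refine lt_of_le_of_ne le_sup_left fun h => hpU ?_
    rw [h]
    exact Submodule.mem_sup_right (Submodule.mem_span_singleton_self _)
  have := Submodule.finrank_lt_finrank_of_lt hlt
  exact (Submodule.eq_of_le_of_finrank_le hle (by lia)).ge

/-- A codimension-one step `V ^ k < V ^ (k + 1)` that is followed by a strict step is witnessed by
the `(k + 1)`-st power of an element of `V`. -/
lemma exists_pow_notMem [FiniteDimensional F A] {V : Submodule F A} (h1 : (1 : A) ∈ V) {k : ℕ}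
    (hr : Module.finrank F ↥(V ^ (k + 1)) ≤ Module.finrank F ↥(V ^ k) + 1)
    (hs : ¬ V ^ (k + 1) ≤ V ^ k) (hs' : ¬ V ^ (k + 2) ≤ V ^ (k + 1)) :
    ∃ v ∈ V, v ^ (k + 1) ∉ V ^ k := by
  have hmono := pow_mono_of_one_mem h1
  obtain ⟨v, hv, q, hq, hvq⟩ : ∃ v ∈ V, ∃ q ∈ V ^ k, v * q ∉ V ^ k := by
    by_contra! H
    exact hs (by rw [pow_succ', Submodule.mul_le]; exact H)
  refine ⟨v, hv, ?_⟩
  -- An element `v ^ (i + 1) * r` outside `V ^ k` whose last `k - i` factors are still arbitrary.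
  have key : ∀ i ≤ k, ∃ r ∈ V ^ (k - i), v ^ (i + 1) * r ∉ V ^ k := by
    intro i
    induction i with
    | zero => intro _; exact ⟨q, by simpa using hq, by simpa using hvq⟩
    | succ i ih =>
      intro hi
      obtain ⟨r, hrm, hr'⟩ := ih (by lia)
      have hq' : v ^ i * r ∈ V ^ k := by
        have := Submodule.mul_mem_mul (Submodule.pow_mem_pow V hv i) hrm
        rwa [← pow_add, Nat.add_sub_cancel' (by lia)] at this
      rw [pow_succ', mul_assoc] at hr'
      have hp : v * (v ^ i * r) ∈ V ^ (k + 1) := by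
        rw [pow_succ']; exact Submodule.mul_mem_mul hv hq'
      have hspan := next_step hv hq' (le_sup_span_of_finrank (hmono (Nat.le_succ k)) hp hr' hr)
      have hout : v * (v * (v ^ i * r)) ∉ V ^ (k + 1) := fun h =>
        hs' (hspan.trans (sup_le le_rfl (by simpa using h)))
      by_contra! H
      apply hout
      -- The last factor of `r` is split off by linearity.
      have hsub : V ^ (k - i) ≤ (V ^ (k + 1)).comap (LinearMap.mulLeft F (v ^ (i + 2))) := by
        rw [show k - i = (k - (i + 1)) + 1 by lia, pow_succ, Submodule.mul_le]
        intro a ha b hb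
        rw [Submodule.mem_comap, LinearMap.mulLeft_apply, ← mul_assoc, pow_succ V]
        exact Submodule.mul_mem_mul (H a ha) hb
      have := hsub hrm
      rw [Submodule.mem_comap, LinearMap.mulLeft_apply] at this
      simpa [pow_succ', mul_assoc] using this
  obtain ⟨r, hr0, hrk⟩ := key k le_rfl
  rw [Nat.sub_self, pow_zero, Submodule.mem_one] at hr0
  obtain ⟨c, rfl⟩ := hr0
  intro hmem
  apply hrk
  rw [← Algebra.commutes, ← Algebra.smul_def]
  exact Submodule.smul_mem _ _ hmem

/-- Once `v ^ (k + 1)` spans the step `V ^ k < V ^ (k + 1)`, powers of `v` span all later ones. -/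
lemma pow_notMem_of_step {V : Submodule F A} {k : ℕ} {v : A}
    (hv : v ∈ V) (h : V ^ (k + 1) ≤ V ^ k ⊔ F ∙ (v ^ (k + 1))) (j : ℕ)
    (hs : ¬ V ^ (k + j + 1) ≤ V ^ (k + j)) : v ^ (k + j + 1) ∉ V ^ (k + j) := by
  have key : V ^ (k + j + 1) ≤ V ^ (k + j) ⊔ F ∙ (v ^ (k + j + 1)) := by
    clear hs
    induction j with
    | zero => exact h
    | succ j ih =>
      rw [pow_succ' v] at ih
      have := next_step hv (Submodule.pow_mem_pow V hv (k + j)) ih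
      rwa [← pow_succ' v, ← pow_succ' v] at this
  exact fun hmem => hs (key.trans (sup_le le_rfl (by simpa using hmem)))

lemma lt_natDegree_minpoly [FiniteDimensional F A] {V : Submodule F A} (h1 : (1 : A) ∈ V) {n : ℕ}
    {v : A} (hv : v ∈ V) (h : v ^ (n + 1) ∉ V ^ n) : n + 1 < (minpoly F v).natDegree := by
  by_contra! hle
  apply h
  have hmonic := minpoly.monic (Algebra.IsIntegral.isIntegral (R := F) v)
  have : Nontrivial A :=
    ⟨⟨v ^ (n + 1), 0, fun h0 => h (by rw [h0]; exact zero_mem _)⟩⟩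
  set R : Polynomial F := Polynomial.X ^ (n + 1) %ₘ minpoly F v with hR
  have hdeg : R.natDegree < n + 1 :=
    (Polynomial.natDegree_modByMonic_lt _ hmonic (minpoly.ne_one F v)).trans_le hle
  have hval : Polynomial.aeval v R = v ^ (n + 1) := by
    rw [hR, Polynomial.aeval_modByMonic_eq_self_of_root (minpoly.aeval F v)]
    simp
  rw [← hval, Polynomial.aeval_eq_sum_range' hdeg]
  refine Submodule.sum_mem _ fun i hi => Submodule.smul_mem _ _ ?_
  exact pow_mono_of_one_mem h1 (Nat.lt_succ_iff.1 (Finset.mem_range.1 hi))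
    (Submodule.pow_mem_pow V hv i)

lemma natDegree_minpoly_le_mAlg [FiniteDimensional F A] (v : A) :
    (minpoly F v).natDegree ≤ mAlg F A := by
  refine le_csSup ⟨Module.finrank F A, ?_⟩ ⟨v, rfl⟩
  rintro _ ⟨τ, rfl⟩
  exact minpoly.natDegree_le τ

end

theorem stmt_17 (F A : Type*) [Field F] [Ring A] [Algebra F A] [FiniteDimensional F A]
    (hd : Module.finrank F A ≤ mAlg F A + 4) (hm : 3 ≤ mAlg F A)
    (S : Set A) (hS : Algebra.adjoin F S = ⊤) :
    lenS F S ≤ mAlg F A := by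
  by_contra! hlt
  obtain ⟨V, hV⟩ : ∃ V, V = Submodule.span F ({1} ∪ S) := ⟨_, rfl⟩
  have h1 : (1 : A) ∈ V := hV ▸ Submodule.subset_span (by simp)
  have hmono := pow_mono_of_one_mem h1
  -- `lenS F S` is positive, so it is not the junk value `0` of `sInf ∅`.
  have htop : V ^ lenS F S = ⊤ := by
    rw [hV]
    exact Nat.sInf_mem (Nat.nonempty_of_pos_sInf (show 0 < lenS F S by lia))
  have hne : ∀ j < lenS F S, V ^ j ≠ ⊤ := by
    intro j hj
    rw [hV]
    exact Nat.notMem_of_lt_sInf hj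
  obtain ⟨n, hn⟩ : ∃ n, lenS F S = n + 1 := ⟨lenS F S - 1, by lia⟩
  rw [hn] at htop hne hlt
  have hstrict : ∀ j < n + 1, ¬ V ^ (j + 1) ≤ V ^ j := by
    intro j hj hle
    have hstab : ∀ i, V ^ (j + i) ≤ V ^ j := by
      intro i
      induction i with
      | zero => exact le_rfl
      | succ i ih =>
        rw [← add_assoc, pow_succ]
        refine (mul_le_mul' ih le_rfl).trans ?_
        rwa [← pow_succ]
    refine hne j hj (top_le_iff.1 ?_)
    rw [← htop, show n + 1 = j + (n + 1 - j) by lia]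
    exact hstab _
  by_cases hex : ∃ k < n, Module.finrank F ↥(V ^ (k + 1)) ≤ Module.finrank F ↥(V ^ k) + 1
  · obtain ⟨k, hk, hr⟩ := hex
    obtain ⟨v, hv, hvk⟩ := exists_pow_notMem h1 hr (hstrict k (by lia)) (hstrict (k + 1) (by lia))
    have hspan := le_sup_span_of_finrank (hmono (Nat.le_succ k))
      (Submodule.pow_mem_pow V hv (k + 1)) hvk hr
    have hout := pow_notMem_of_step hv hspan (n - k) (hstrict _ (by lia))
    rw [Nat.add_sub_cancel' hk.le] at hout
    have := lt_natDegree_minpoly h1 hv hout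
    have := natDegree_minpoly_le_mAlg (F := F) v
    lia
  · push Not at hex
    have hlow : ∀ j ≤ n, 2 * j + 1 ≤ Module.finrank F ↥(V ^ j) := by
      intro j
      induction j with
      | zero =>
        intro _
        have hbot : V ^ 0 ≠ ⊥ := by
          intro h0
          have h10 : (1 : A) ∈ V ^ 0 := by rw [pow_zero]; exact Submodule.one_le.1 le_rfl
          rw [h0, Submodule.mem_bot] at h10
          have := subsingleton_of_zero_eq_one h10.symm
          exact hne 0 (by lia) (Subsingleton.elim _ _)
        have := Submodule.one_le_finrank_iff.2 hbot
        lia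
      | succ j ih =>
        intro hj
        have := hex j (by lia)
        have := ih (by lia)
        lia
    have hlast : Module.finrank F ↥(V ^ n) < Module.finrank F A :=
      Submodule.finrank_lt (hne n (by lia))
    have := hlow n le_rfl
    lia
end

section
/- Let F be a field and A a finite-dimensional associative unital F-algebra with m(A) ≥ 2, and set d = dim_F A, m = m(A). Then every generating set S of A satisfies l(S) < m·√(2d/(m−1) + 1/4) + m/2 − 2 (an inequality of real numbers). -/
/-- The element of `A` represented by a word in the alphabet `S`. -/
def evalWord {A : Type*} [Ring A] {S : Set A} (w : List S) : A :=
  (w.map Subtype.val).prod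

/-- The degree-lexicographic order on words in `S`, with respect to some well-order of `S`. -/
def WordLT {A : Type*} {S : Set A} : List S → List S → Prop :=
  List.Shortlex WellOrderingRel

/-- A word is reducible if its value is a linear combination of values of
degree-lexicographically smaller words. -/
def Reducible (F : Type*) [Field F] {A : Type*} [Ring A] [Algebra F A] {S : Set A}
    (w : List S) : Prop :=
  evalWord w ∈ Submodule.span F (evalWord '' {v | WordLT v w})

theorem WordLT.append {A : Type*} {S : Set A} {u v : List S} (h : WordLT u v) (a b : List S) :
    WordLT (a ++ u ++ b) (a ++ v ++ b) := by
  have h' : WordLT (u ++ b) (v ++ b) := by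
    rcases List.shortlex_def.mp h with h1 | ⟨h1, h2⟩
    · exact List.Shortlex.of_length_lt (by simpa using h1)
    · refine List.Shortlex.of_lex (by simpa using h1) ?_
      clear h
      -- for words of equal length, the first difference decides
      induction h2 with
      | nil => simp at h1
      | cons h ih => exact List.Lex.cons (ih (by simpa using h1))
      | rel h => exact List.Lex.rel h
  simpa [WordLT, List.append_assoc] using List.Shortlex.append_left h' a

section Words

variable {F A : Type*} [Field F] [Ring A] [Algebra F A] {S : Set A}

theorem evalWord_append (u v : List S) : evalWord (u ++ v) = evalWord u * evalWord v := by
  simp [evalWord]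

theorem evalWord_flatten_replicate (u : List S) (k : ℕ) :
    evalWord (List.replicate k u).flatten = evalWord u ^ k := by
  induction k with
  | zero => simp [evalWord]
  | succ k ih => rw [List.replicate_succ, List.flatten_cons, evalWord_append, ih, pow_succ']

theorem Reducible.append {u : List S} (h : Reducible F u) (a b : List S) :
    Reducible F (a ++ u ++ b) := by
  unfold Reducible at h ⊢
  let φ : A →ₗ[F] A := LinearMap.mulRight F (evalWord b) ∘ₗ LinearMap.mulLeft F (evalWord a)
  have h1 := Submodule.mem_map_of_mem (f := φ) h
  rw [Submodule.map_span] at h1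
  have h2 : φ (evalWord u) = evalWord (a ++ u ++ b) := by
    simp [φ, evalWord_append, mul_assoc]
  rw [h2] at h1
  refine Submodule.span_mono ?_ h1
  rintro _ ⟨_, ⟨v, hv, rfl⟩, rfl⟩
  exact ⟨a ++ v ++ b, WordLT.append hv a b, by simp [φ, evalWord_append, mul_assoc]⟩

theorem Reducible.of_infix {u w : List S} (h : Reducible F u) (hw : u <:+: w) :
    Reducible F w := by
  obtain ⟨a, b, rfl⟩ := hw
  exact h.append a b

/-- A nonempty word raised to a power at least the degree of its minimal polynomial is
reducible, since lower powers are shorter words. -/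
theorem reducible_power [FiniteDimensional F A] {u : List S} (hu : u ≠ []) {m : ℕ}
    (hm : (minpoly F (evalWord u)).natDegree ≤ m) :
    Reducible F (List.replicate m u).flatten := by
  set n := (minpoly F (evalWord u)).natDegree with hn
  have hred : Reducible F (List.replicate n u).flatten := by
    unfold Reducible
    rw [evalWord_flatten_replicate]
    have hmonic := minpoly.monic (Algebra.IsIntegral.isIntegral (R := F) (evalWord u))
    have h0 := minpoly.aeval F (evalWord u)
    rw [Polynomial.aeval_eq_sum_range, Finset.sum_range_succ, ← hn,
      show (minpoly F (evalWord u)).coeff n = 1 from hmonic.coeff_natDegree, one_smul] at h0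
    rw [← neg_eq_of_add_eq_zero_right h0]
    refine Submodule.neg_mem _ (Submodule.sum_mem _ fun i hi => Submodule.smul_mem _ _ ?_)
    refine Submodule.subset_span ⟨(List.replicate i u).flatten, ?_, evalWord_flatten_replicate u i⟩
    refine List.Shortlex.of_length_lt ?_
    have := List.length_pos_iff.mpr hu
    simpa using Nat.mul_lt_mul_of_pos_right (Finset.mem_range.mp hi) this
  refine hred.of_infix (List.IsPrefix.isInfix ⟨(List.replicate (m - n) u).flatten, ?_⟩)
  rw [← List.flatten_append, List.replicate_append_replicate, Nat.add_sub_cancel' hm]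

/-- Irreducible words have linearly independent values: the largest word of a finite set of
irreducible words is not in the span of the others. -/
theorem card_le_finrank_of_irreducible [FiniteDimensional F A] (T : Finset (List S))
    (hT : ∀ w ∈ T, ¬ Reducible F w) : T.card ≤ Module.finrank F A := by
  classical
  have wo : IsWellOrder (List S) WordLT :=
    { toTrichotomous := inferInstanceAs (Std.Trichotomous (List.Shortlex WellOrderingRel))
      toIsWellFounded := ⟨List.Shortlex.wf WellOrderingRel.isWellOrder.wf⟩ }
  let _ : LinearOrder (List S) := IsWellOrder.linearOrder WordLT
  have key : LinearIndepOn F (evalWord (S := S)) (T : Set (List S)) := by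
    induction T using Finset.induction_on_max with
    | empty => simp
    | insert a s hs ih =>
      rw [Finset.coe_insert]
      refine (ih fun w hw => hT w (Finset.mem_insert_of_mem hw)).insert fun hmem => ?_
      refine hT a (Finset.mem_insert_self _ _) (Submodule.span_mono (Set.image_mono ?_) hmem)
      exact fun v hv => hs v hv
  simpa using LinearIndependent.fintype_card_le_finrank key

theorem evalWord_mem_Lk {w : List S} {k : ℕ} (h : w.length ≤ k) : evalWord w ∈ Lk F S k := by
  have h1 : (1 : Submodule F A) ≤ Submodule.span F ({1} ∪ S) := by
    rw [Submodule.one_le]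
    exact Submodule.subset_span (Or.inl rfl)
  refine pow_le_pow_right' h1 h ?_
  clear h
  induction w with
  | nil => simpa [evalWord] using ⟨1, map_one _⟩
  | cons a w ih =>
    rw [List.length_cons, pow_succ']
    have : evalWord (a :: w) = a * evalWord w := by simp [evalWord]
    rw [this]
    exact Submodule.mul_mem_mul (Submodule.subset_span (Or.inr a.2)) ih

open scoped Pointwise in
theorem Lk_le_of_words {k : ℕ} {P : Submodule F A}
    (h : ∀ w : List S, w.length ≤ k → evalWord w ∈ P) : Lk F S k ≤ P := by
  unfold Lk
  rw [Submodule.span_pow, Submodule.span_le]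
  intro x hx
  suffices ∃ w : List S, w.length ≤ k ∧ evalWord w = x by
    obtain ⟨w, hw, rfl⟩ := this
    exact h w hw
  clear h
  induction k generalizing x with
  | zero => exact ⟨[], by simp, by simpa [evalWord, eq_comm] using hx⟩
  | succ k ih =>
    rw [pow_succ'] at hx
    obtain ⟨a, ha, y, hy, rfl⟩ := hx
    obtain ⟨w, hw, rfl⟩ := ih hy
    rcases ha with rfl | ha
    · exact ⟨w, by omega, by simp⟩
    · exact ⟨⟨a, ha⟩ :: w, by simpa using hw, by simp [evalWord]⟩

/-- If all words of length `k + 1` were reducible, `Lk F S (k + 1)` would collapse to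
`Lk F S k`; hence the length of `S` is attained by an irreducible word. -/
theorem exists_irreducible_length [Nontrivial A] :
    ∃ w : List S, w.length = lenS F S ∧ ¬ Reducible F w := by
  rcases hl : lenS F S with _ | k
  · refine ⟨[], rfl, ?_⟩
    have : {v : List S | WordLT v []} = ∅ := by ext v; simp [WordLT]
    simp [Reducible, this, evalWord]
  · by_contra! hall
    have hne : {k | Lk F S k = ⊤}.Nonempty := by
      by_contra hne
      rw [Set.not_nonempty_iff_eq_empty] at hne
      simp [lenS, hne] at hl
    have htop : Lk F S (k + 1) = ⊤ := hl ▸ Nat.sInf_mem hne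
    have hk : Lk F S k ≠ ⊤ := fun h => by
      have : lenS F S ≤ k := Nat.sInf_le h
      omega
    refine hk (top_le_iff.mp (htop ▸ Lk_le_of_words fun w => ?_))
    induction w using (List.Shortlex.wf (WellOrderingRel.isWellOrder (α := S)).wf).induction with
    | _ w ih =>
      intro hw
      rcases Nat.lt_or_ge k w.length with hlt | hle
      · have hr : Reducible F w := hall w (by omega)
        refine Submodule.span_le.mpr ?_ hr
        rintro _ ⟨v, hv, rfl⟩
        refine ih v hv ?_
        rcases List.shortlex_def.mp hv with h | h <;> omega
      · exact evalWord_mem_Lk hle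

end Words

/-- If the length-`k` factors of `w` at positions `i` and `i + p` agree, then `w` has period `p`
there, so it contains the `(n + 1)`-st power of a word of length `p` as soon as `n * p ≤ k`. -/
theorem power_infix_of_factor_eq {α : Type*} {w : List α} {i p k n : ℕ}
    (hlen : i + p + k ≤ w.length) (hk : n * p ≤ k)
    (h : (w.drop i).take k = (w.drop (i + p)).take k) :
    (List.replicate (n + 1) ((w.drop i).take p)).flatten <:+: w := by
  set u := (w.drop i).take p with hu
  have hul : u.length = p := by simp [hu]; omega
  have hx : (w.drop i).take (p + k) = u ++ (w.drop i).take k := by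
    rw [h, List.take_add, List.drop_drop]
  have key : ∀ r, r ≤ n → (List.replicate r u).flatten <+: (w.drop i).take k := by
    intro r
    induction r with
    | zero => simp
    | succ r ih =>
      intro hr
      have h1 : (List.replicate (r + 1) u).flatten <+: w.drop i := by
        refine List.IsPrefix.trans ?_ (List.take_prefix (p + k) _)
        rw [hx, List.replicate_succ, List.flatten_cons, List.prefix_append_right_inj]
        exact ih (by omega)
      refine List.prefix_take_iff.mpr ⟨h1, ?_⟩
      have := Nat.mul_le_mul_right p hr
      simp [hul]
      omega
  refine List.IsInfix.trans (List.IsPrefix.isInfix ?_)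
    ((List.take_prefix (p + k) _).isInfix.trans (List.drop_suffix i w).isInfix)
  rw [hx, List.replicate_succ, List.flatten_cons, List.prefix_append_right_inj]
  exact key n le_rfl

/-- A word of length at least `(n + 1) * q - 2` without `(n + 1)`-st powers has at least
`n * q * (q + 1) / 2` distinct factors: for `k = n * a + b` with `a < q` and `b < n`, the
factors of length `k` starting at the positions `0, …, a` are distinct. -/
theorem exists_many_factors {α : Type*} [DecidableEq α] {w : List α} {n q : ℕ}
    (hlen : (n + 1) * q ≤ w.length + 2)
    (hpow : ∀ u : List α, u ≠ [] → ¬ (List.replicate (n + 1) u).flatten <:+: w) :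
    ∃ T : Finset (List α), (∀ v ∈ T, v <:+: w) ∧ 2 * T.card = n * q * (q + 1) := by
  let I : Finset (Σ _ : ℕ, ℕ × ℕ) :=
    (Finset.range q).sigma fun a => Finset.range n ×ˢ Finset.range (a + 1)
  let g : (Σ _ : ℕ, ℕ × ℕ) → List α := fun x => (w.drop x.2.2).take (n * x.1 + x.2.1)
  have bound : ∀ a b i, a < q → b < n → i < a + 1 → i + (n * a + b) ≤ w.length := by
    intro a b i ha hb hi
    have : (n + 1) * (a + 1) ≤ (n + 1) * q := Nat.mul_le_mul_left _ ha
    nlinarith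
  -- equal factors at two different positions produce a forbidden power
  have noteq : ∀ a b i j, a < q → b < n → i < j → j < a + 1 →
      (w.drop i).take (n * a + b) ≠ (w.drop j).take (n * a + b) := by
    intro a b i j ha hb hij hj h
    obtain ⟨p, rfl⟩ := Nat.exists_eq_add_of_lt hij
    have hb' := bound a b _ ha hb hj
    have hp : n * (p + 1) ≤ n * a := Nat.mul_le_mul_left _ (by omega)
    refine hpow _ ?_ (power_infix_of_factor_eq (i := i) (p := p + 1) (k := n * a + b)
      (by omega) (by omega) h)
    rw [← List.length_pos_iff]
    simp
    omega
  have hinj : Set.InjOn g I := by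
    rintro ⟨a, b, i⟩ hx ⟨a', b', i'⟩ hy hxy
    simp only [I, Finset.coe_sigma, Set.mem_sigma_iff, Finset.coe_range, Set.mem_Iio,
      Finset.coe_product, Set.mem_prod] at hx hy
    obtain ⟨ha, hb, hi⟩ := hx
    obtain ⟨ha', hb', hi'⟩ := hy
    have e1 := bound a b i ha hb hi
    have e2 := bound a' b' i' ha' hb' hi'
    have hl : n * a + b = n * a' + b' := by
      have := congrArg List.length hxy
      simp only [g, List.length_take, List.length_drop] at this
      omega
    have haa : a = a' := by
      have := congrArg (· / n) hl
      simpa [Nat.mul_add_div (show 0 < n by omega), Nat.div_eq_of_lt hb, Nat.div_eq_of_lt hb']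
        using this
    subst haa
    obtain rfl : b = b' := by omega
    rcases lt_trichotomy i i' with h | rfl | h
    · exact absurd hxy (noteq a b i i' ha hb h hi')
    · rfl
    · exact absurd hxy.symm (noteq a b i' i ha hb h hi)
  refine ⟨I.image g, ?_, ?_⟩
  · intro v hv
    obtain ⟨x, -, rfl⟩ := Finset.mem_image.mp hv
    exact (List.take_prefix _ _).isInfix.trans (List.drop_suffix _ w).isInfix
  · rw [Finset.card_image_of_injOn hinj]
    simp only [I, Finset.card_sigma, Finset.card_product, Finset.card_range]
    clear hlen bound noteq hinj
    induction q with
    | zero => simp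
    | succ q ih => rw [Finset.sum_range_succ, mul_add, ih]; ring

theorem stmt_18 (F A : Type*) [Field F] [Ring A] [Algebra F A] [FiniteDimensional F A]
    (hm : 2 ≤ mAlg F A)
    (S : Set A) (hS : Algebra.adjoin F S = ⊤) :
    (lenS F S : ℝ) <
      (mAlg F A : ℝ) *
          Real.sqrt (2 * (Module.finrank F A : ℝ) / ((mAlg F A : ℝ) - 1) + 1 / 4) +
        (mAlg F A : ℝ) / 2 - 2 := by
  classical
  have hbdd : BddAbove {d | ∃ τ : A, d = (minpoly F τ).natDegree} :=
    ⟨Module.finrank F A, by rintro _ ⟨τ, rfl⟩; exact minpoly.natDegree_le τ⟩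
  have hdeg : ∀ τ : A, (minpoly F τ).natDegree ≤ mAlg F A := fun τ => le_csSup hbdd ⟨τ, rfl⟩
  have hnt : Nontrivial A := by
    by_contra h
    rw [not_nontrivial_iff_subsingleton] at h
    have : mAlg F A ≤ 0 := csSup_le ⟨_, 0, rfl⟩ (by
      rintro _ ⟨τ, rfl⟩
      have := minpoly.natDegree_le (A := F) τ
      rwa [Module.finrank_zero_of_subsingleton] at this)
    omega
  obtain ⟨w, hwl, hw⟩ := exists_irreducible_length (F := F) (S := S)
  rw [← hwl]
  generalize mAlg F A = m at *
  obtain ⟨n, rfl⟩ : ∃ n, m = n + 1 := ⟨m - 1, by omega⟩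
  set q := (w.length + 2) / (n + 1) with hq
  obtain ⟨T, hTw, hTc⟩ := exists_many_factors (n := n) (q := q) (Nat.mul_div_le _ _)
    fun u hu h => hw ((reducible_power (F := F) hu (hdeg _)).of_infix h)
  have hcard := card_le_finrank_of_irreducible (F := F) T fun v hv h => hw (h.of_infix (hTw v hv))
  have hlt : w.length + 2 < (n + 1) * (q + 1) := Nat.lt_mul_div_succ _ (by omega)
  have hd : n * q * (q + 1) ≤ 2 * Module.finrank F A := by omega
  generalize Module.finrank F A = d at *
  generalize w.length = l at *
  have hn : (1 : ℝ) ≤ n := by exact_mod_cast (by omega : 1 ≤ n)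
  have hd' : (n : ℝ) * q * (q + 1) ≤ 2 * d := by exact_mod_cast hd
  have hlt' : (l : ℝ) + 2 < (n + 1) * (q + 1) := by exact_mod_cast hlt
  have hq0 : (0 : ℝ) ≤ q := by positivity
  have hl0 : (0 : ℝ) ≤ l := by positivity
  push_cast
  have e : (q + 1 / 2 : ℝ) ≤ Real.sqrt (2 * d / ((n : ℝ) + 1 - 1) + 1 / 4) := by
    refine Real.le_sqrt_of_sq_le ?_
    have : (q : ℝ) * (q + 1) ≤ 2 * d / ((n : ℝ) + 1 - 1) := by
      rw [add_sub_cancel_right, le_div_iff₀ (by linarith)]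
      linarith
    nlinarith
  nlinarith
end
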